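/- arXiv:2601.12888 — 2 statements merged into one kernel-verified Lean document; each statement's English description precedes it below -/
import Mathlib

section
/- Let α, β, γ ∈ ℂ with none of α, β, γ a nonpositive integer, let δ, w ∈ ℂ, and let k ∈ (0,1). Define f_{m,n} and c_n as in the context and set ε := α + β + 1 − γ − δ. Then the power series F(z) := Σ_{n=0}^{∞} c_n z^n converges for every complex z with |z| < 1, F(0) = 1, and F satisfies Heun's differential equation on the punctured disk: for every z with 0 < |z| < 1, F''(z) + ( γ/z − δ/(1−z) − εk²/(1−k²z) )·F'(z) + ( (w − k²αβ(1−z)) / (z(1−z)(1−k²z)) )·F(z) = 0. -/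
/-- The Pochhammer symbol `(x)_n = x(x+1)⋯(x+n-1)`. -/
noncomputable def poch (x : ℂ) (n : ℕ) : ℂ := ∏ i ∈ Finset.range n, (x + (i : ℂ))

/-- The index set of tuples `(ℓ_1, j_1, …, ℓ_m, j_m)` with
`0 ≤ ℓ_1 ≤ j_1 < ℓ_2 ≤ j_2 < ⋯ < ℓ_m ≤ j_m < n`, encoded as pairs of functions
`(ℓ, j) : (Fin m → Fin n) × (Fin m → Fin n)`. -/
def heunIdx (m n : ℕ) : Finset ((Fin m → Fin n) × (Fin m → Fin n)) :=
  Finset.univ.filter fun p =>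
    (∀ s : Fin m, (p.1 s : ℕ) ≤ (p.2 s : ℕ)) ∧
    (∀ s t : Fin m, (s : ℕ) + 1 = (t : ℕ) → (p.2 s : ℕ) < (p.1 t : ℕ))

/-- The coefficients `f_{m,n}`: `f_{0,n} = k^{2n}`; for `1 ≤ m ≤ n`,
`f_{m,n} = (-1)^m k^{2n-2m} Σ ∏_{s=1}^m [j_s!(γ)_{j_s}(α)_{ℓ_s}(β)_{ℓ_s} /
(ℓ_s!(γ)_{ℓ_s}(α)_{j_s+1}(β)_{j_s+1})] k^{-2(j_s-ℓ_s)} (w - (1-k²)δℓ_s)`,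
the sum running over `heunIdx m n`; and `f_{m,n} = 0` for `m < 0` or `m > n`. -/
noncomputable def heunf (k : ℝ) (α β γ δ w : ℂ) (m : ℤ) (n : ℕ) : ℂ :=
  if m = 0 then (k : ℂ) ^ (2 * n)
  else if m < 0 ∨ (n : ℤ) < m then 0
  else (-1 : ℂ) ^ m.toNat * (k : ℂ) ^ (2 * (n : ℤ) - 2 * m) *
    ∑ p ∈ heunIdx m.toNat n, ∏ s : Fin m.toNat,
      ((Nat.factorial (p.2 s : ℕ) : ℂ) * poch γ (p.2 s : ℕ) * poch α (p.1 s : ℕ) *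
          poch β (p.1 s : ℕ)) /
        ((Nat.factorial (p.1 s : ℕ) : ℂ) * poch γ (p.1 s : ℕ) * poch α ((p.2 s : ℕ) + 1) *
          poch β ((p.2 s : ℕ) + 1)) *
      (k : ℂ) ^ (-(2 : ℤ) * (((p.2 s : ℕ) : ℤ) - ((p.1 s : ℕ) : ℤ))) *
      (w - (1 - (k : ℂ) ^ 2) * δ * ((p.1 s : ℕ) : ℂ))

/-- The Taylor coefficients `c_n = ((α)_n (β)_n / (n! (γ)_n)) Σ_{m=0}^n f_{m,n}`
of the local Heun solution. -/
noncomputable def heunc (k : ℝ) (α β γ δ w : ℂ) (n : ℕ) : ℂ :=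
  poch α n * poch β n / ((Nat.factorial n : ℂ) * poch γ n) *
    ∑ m ∈ Finset.range (n + 1), heunf k α β γ δ w (m : ℤ) n

/-! With `q = k²` and `A_n = (α)_n (β)_n / (n! (γ)_n)`, one has `c_n = A_n qⁿ H_n`, where `H_n`
collects the sums over interlacing tuples of all lengths. Splitting off the last pair `(ℓ_m, j_m)`
shows that `H` is the Neumann series of a discrete Volterra equation
`H_{n+1} = H_n + ∑_{ℓ ≤ n} T(ℓ, n) H_ℓ`. Multiplied by
`(n + 1)(γ + n) A_{n+1} = (α + n)(β + n) A_n`, it becomes a recurrence for `c`: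
`(n + 1)(γ + n) c_{n+1} = q (α + n)(β + n) c_n - ∑_{ℓ ≤ n} (w - (1 - q) δ ℓ) c_ℓ`.

Its first difference is a three-term recurrence whose limiting characteristic roots are `1` and `q`,
whence convergence in the unit disk (Poincaré). Its generating function reads
`z(1 - qz) F'' + (γ - q(α + β + 1)z) F' - qαβ F = -(w F - (1 - q) δ z F') / (1 - z)`,
because taking partial sums of coefficients divides a power series by `1 - z`. This is Heun's
equation.
-/

open Filter Finset Metric Topology

section Interlacing

/-- The index set of the iterated sums `f_{m,n}`, with natural number entries so that different
`n` share one ambient type: pairs `(ℓ, j)` with `ℓ_s ≤ j_s < n` and `j_s < ℓ_t` for `s < t`. -/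
def interlacingPairs (m n : ℕ) : Finset ((Fin m → ℕ) × (Fin m → ℕ)) :=
  {p ∈ Fintype.piFinset (fun _ => range n) ×ˢ Fintype.piFinset (fun _ => range n) |
    (∀ s, p.1 s ≤ p.2 s) ∧ ∀ s t, s < t → p.2 s < p.1 t}

theorem mem_interlacingPairs {m n : ℕ} {ℓ j : Fin m → ℕ} :
    (ℓ, j) ∈ interlacingPairs m n ↔
      (∀ s, j s < n) ∧ (∀ s, ℓ s ≤ j s) ∧ ∀ s t, s < t → j s < ℓ t := by
  simp only [interlacingPairs, mem_filter, mem_product, Fintype.mem_piFinset, mem_range]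
  exact ⟨fun ⟨⟨_, hj⟩, h⟩ => ⟨hj, h⟩, fun ⟨hj, h⟩ => ⟨⟨fun s => (h.1 s).trans_lt (hj s), hj⟩, h⟩⟩

theorem snoc_mem_interlacingPairs {m n : ℕ} {ℓ j : Fin m → ℕ} {l i : ℕ} :
    ((Fin.snoc ℓ l : Fin (m + 1) → ℕ), (Fin.snoc j i : Fin (m + 1) → ℕ)) ∈
        interlacingPairs (m + 1) n ↔ i < n ∧ l ≤ i ∧ (ℓ, j) ∈ interlacingPairs m l := by
  simp only [mem_interlacingPairs, Fin.forall_fin_succ', Fin.snoc_castSucc, Fin.snoc_last,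
    Fin.castSucc_lt_castSucc_iff, Fin.castSucc_lt_last, lt_irrefl, Fin.not_lt.2 (Fin.le_last _),
    IsEmpty.forall_iff, forall_true_left, and_true, implies_true]
  constructor
  · rintro ⟨⟨-, hi⟩, ⟨hle, hli⟩, hlt⟩
    exact ⟨hi, hli, fun s => (hlt s).2, hle, fun s => (hlt s).1⟩
  · rintro ⟨hi, hli, hj, hle, hlt⟩
    exact ⟨⟨fun s => (hj s).trans (hli.trans_lt hi), hi⟩, ⟨hle, hli⟩, fun s => ⟨hlt s, hj s⟩⟩

variable {R : Type*} [CommSemiring R]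

/-- The iterated sum `∑ ∏_s T(ℓ_s, j_s)` over interlacing pairs below `n`. -/
def interlacingSum (T : ℕ → ℕ → R) (m n : ℕ) : R :=
  ∑ p ∈ interlacingPairs m n, ∏ s, T (p.1 s) (p.2 s)

theorem snd_lt_fst_of_mem_heunIdx {m n : ℕ} {p : (Fin m → Fin n) × (Fin m → Fin n)}
    (hp : p ∈ heunIdx m n) {s t : Fin m} (hst : s < t) : p.2 s < p.1 t := by
  obtain ⟨hle, hnext⟩ := (mem_filter.1 hp).2
  obtain ⟨t, ht⟩ := t
  induction t with
  | zero => exact absurd hst (Nat.not_lt_zero _)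
  | succ t ih =>
    rcases (Nat.lt_succ_iff.1 hst).eq_or_lt with heq | hlt
    · exact hnext _ _ (congrArg (· + 1) heq)
    · exact ((ih (by omega) hlt).trans_le (hle _)).trans (hnext _ _ rfl)

theorem sum_heunIdx_eq_interlacingSum (T : ℕ → ℕ → R) (m n : ℕ) :
    ∑ p ∈ heunIdx m n, ∏ s, T (p.1 s) (p.2 s) = interlacingSum T m n := by
  refine sum_bij (fun p _ => (fun s => (p.1 s : ℕ), fun s => (p.2 s : ℕ))) ?_ ?_ ?_
    fun _ _ => rfl
  · intro p hp
    exact mem_interlacingPairs.2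
      ⟨fun s => (p.2 s).2, (mem_filter.1 hp).2.1, fun s t => snd_lt_fst_of_mem_heunIdx hp⟩
  · rintro ⟨ℓ, j⟩ _ ⟨ℓ', j'⟩ _ h
    simpa [funext_iff, Fin.ext_iff] using h
  · rintro ⟨ℓ, j⟩ hp
    obtain ⟨hj, hle, hlt⟩ := mem_interlacingPairs.1 hp
    refine ⟨(fun s => ⟨ℓ s, (hle s).trans_lt (hj s)⟩, fun s => ⟨j s, hj s⟩), ?_, rfl⟩
    exact mem_filter.2 ⟨mem_univ _, hle, fun s t hst => hlt s t (by simp [Fin.lt_def, ← hst])⟩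

theorem interlacingSum_zero (T : ℕ → ℕ → R) (n : ℕ) : interlacingSum T 0 n = 1 := by
  have h : interlacingPairs 0 n = univ := by ext ⟨ℓ, j⟩; simp [mem_interlacingPairs]
  simp [interlacingSum, h]

theorem interlacingSum_succ (T : ℕ → ℕ → R) (m n : ℕ) :
    interlacingSum T (m + 1) n =
      ∑ i ∈ range n, ∑ l ∈ range (i + 1), T l i * interlacingSum T m l := by
  simp only [interlacingSum, mul_sum, sum_sigma']
  refine sum_bij'
    (fun p _ => ⟨p.2 (Fin.last m), p.1 (Fin.last m), Fin.init p.1, Fin.init p.2⟩)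
    (fun x _ => (Fin.snoc (α := fun _ => ℕ) x.2.2.1 x.2.1, Fin.snoc (α := fun _ => ℕ) x.2.2.2 x.1))
    ?_ ?_ ?_ ?_ ?_
  · rintro ⟨ℓ, j⟩ hp
    rw [← Fin.snoc_init_self ℓ, ← Fin.snoc_init_self j, snoc_mem_interlacingPairs] at hp
    simpa [Nat.lt_succ_iff] using hp
  · rintro ⟨i, l, ℓ, j⟩ hx
    simpa [snoc_mem_interlacingPairs, Nat.lt_succ_iff] using hx
  · rintro ⟨ℓ, j⟩ -
    simp
  · rintro ⟨i, l, ℓ, j⟩ -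
    simp
  · rintro ⟨ℓ, j⟩ -
    rw [Fin.prod_univ_castSucc, mul_comm]
    rfl

theorem interlacingSum_eq_zero_of_lt (T : ℕ → ℕ → R) {m n : ℕ} (h : n < m) :
    interlacingSum T m n = 0 := by
  induction m generalizing n with
  | zero => omega
  | succ m ih =>
    rw [interlacingSum_succ]
    refine sum_eq_zero fun i hi => sum_eq_zero fun l hl => ?_
    rw [mem_range] at hi hl
    rw [ih (by omega), mul_zero]

theorem interlacingSum_const_mul (a : R) (T : ℕ → ℕ → R) (m n : ℕ) :
    interlacingSum (fun l i => a * T l i) m n = a ^ m * interlacingSum T m n := by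
  simp [interlacingSum, prod_mul_distrib, mul_sum]

/-- The total `∑_m ∑ ∏_s T(ℓ_s, j_s)` of the interlacing sums of all lengths below `n`.
It is the Neumann series of a discrete Volterra equation, see `interlacingTotal_succ`. -/
def interlacingTotal (T : ℕ → ℕ → R) (n : ℕ) : R :=
  ∑ m ∈ range (n + 1), interlacingSum T m n

theorem sum_range_interlacingSum (T : ℕ → ℕ → R) {n N : ℕ} (h : n < N) :
    ∑ m ∈ range N, interlacingSum T m n = interlacingTotal T n := by
  refine (sum_subset (range_subset_range.2 h) fun m _ hm => ?_).symm
  exact interlacingSum_eq_zero_of_lt T (by simpa using hm)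

theorem interlacingTotal_succ (T : ℕ → ℕ → R) (n : ℕ) :
    interlacingTotal T (n + 1) =
      interlacingTotal T n + ∑ l ∈ range (n + 1), T l n * interlacingTotal T l := by
  have hstep (m : ℕ) : interlacingSum T (m + 1) (n + 1) =
      interlacingSum T (m + 1) n + ∑ l ∈ range (n + 1), T l n * interlacingSum T m l := by
    simp only [interlacingSum_succ T m, sum_range_succ _ n]
  have htail : ∑ m ∈ range (n + 1), ∑ l ∈ range (n + 1), T l n * interlacingSum T m l =
      ∑ l ∈ range (n + 1), T l n * interlacingTotal T l := by
    rw [sum_comm]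
    refine sum_congr rfl fun l hl => ?_
    rw [← mul_sum, sum_range_interlacingSum T (mem_range.1 hl)]
  have hhead : ∑ m ∈ range (n + 1), interlacingSum T (m + 1) n + 1 = interlacingTotal T n := by
    rw [← interlacingSum_zero T n, ← sum_range_succ' (interlacingSum T · n),
      sum_range_interlacingSum T (by omega)]
  rw [interlacingTotal, sum_range_succ', interlacingSum_zero, sum_congr rfl fun m _ => hstep m,
    sum_add_distrib, htail, ← hhead, add_right_comm]

end Interlacing

section Poincare

variable {𝕜 E : Type*} [NormedField 𝕜] [SeminormedAddCommGroup E] [NormedSpace 𝕜 E]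
  {a b : ℕ → 𝕜} {c : ℕ → E} {p q : 𝕜}

theorem eventually_norm_sub_smul_add_le_of_recurrence (ha : Tendsto a atTop (𝓝 (p + q)))
    (hb : Tendsto b atTop (𝓝 (p * q))) (hc : ∀ n, c (n + 2) = a n • c (n + 1) - b n • c n)
    {r t : ℝ} (ht : 0 < t) (hp : ‖p‖ + t < r) (hq : ‖q‖ < r) :
    ∀ᶠ n in atTop, ‖c (n + 2) - q • c (n + 1)‖ + t * ‖c (n + 1)‖ ≤
      r * (‖c (n + 1) - q • c n‖ + t * ‖c n‖) := by
  have ha₀ := tendsto_iff_norm_sub_tendsto_zero.1 ha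
  have hb₀ := tendsto_iff_norm_sub_tendsto_zero.1 hb
  have hA : ∀ᶠ n in atTop, ‖p‖ + t + ‖a n - (p + q)‖ < r :=
    (ha₀.const_add (‖p‖ + t)).eventually_lt_const (by simpa using hp)
  have hB : ∀ᶠ n in atTop, (‖a n - (p + q)‖ + t) * ‖q‖ + ‖b n - p * q‖ < r * t :=
    (((ha₀.add_const t).mul_const ‖q‖).add hb₀).eventually_lt_const (by nlinarith)
  filter_upwards [hA, hB] with n hAn hBn
  have hsplit : c (n + 2) - q • c (n + 1) =
      p • (c (n + 1) - q • c n) + (a n - (p + q)) • c (n + 1) - (b n - p * q) • c n := by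
    rw [hc]; module
  have hD : ‖c (n + 2) - q • c (n + 1)‖ ≤ ‖p‖ * ‖c (n + 1) - q • c n‖ +
      ‖a n - (p + q)‖ * ‖c (n + 1)‖ + ‖b n - p * q‖ * ‖c n‖ := by
    simp only [hsplit, ← norm_smul]
    exact (norm_sub_le _ _).trans (by gcongr; apply norm_add_le)
  have hX : ‖c (n + 1)‖ ≤ ‖c (n + 1) - q • c n‖ + ‖q‖ * ‖c n‖ := by
    rw [← norm_smul]; exact norm_le_norm_sub_add _ _
  calc
    _ ≤ ‖p‖ * ‖c (n + 1) - q • c n‖ + (‖a n - (p + q)‖ + t) * ‖c (n + 1)‖ +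
        ‖b n - p * q‖ * ‖c n‖ := by linarith
    _ ≤ ‖p‖ * ‖c (n + 1) - q • c n‖ +
        (‖a n - (p + q)‖ + t) * (‖c (n + 1) - q • c n‖ + ‖q‖ * ‖c n‖) +
        ‖b n - p * q‖ * ‖c n‖ := by gcongr
    _ = (‖p‖ + t + ‖a n - (p + q)‖) * ‖c (n + 1) - q • c n‖ +
        ((‖a n - (p + q)‖ + t) * ‖q‖ + ‖b n - p * q‖) * ‖c n‖ := by ring
    _ ≤ r * ‖c (n + 1) - q • c n‖ + r * t * ‖c n‖ := by gcongr
    _ = _ := by ring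

theorem summable_norm_mul_pow_of_recurrence (ha : Tendsto a atTop (𝓝 (p + q)))
    (hb : Tendsto b atTop (𝓝 (p * q))) (hc : ∀ n, c (n + 2) = a n • c (n + 1) - b n • c n)
    {ρ : ℝ} (hρ : 0 ≤ ρ) (hp : ‖p‖ * ρ < 1) (hq : ‖q‖ * ρ < 1) :
    Summable fun n => ‖c n‖ * ρ ^ n := by
  obtain ⟨r, hpr, hqr, hr⟩ : ∃ r, ‖p‖ < r ∧ ‖q‖ < r ∧ r * ρ < 1 := by
    have hcont : Tendsto (fun r => r * ρ) (𝓝[>] max ‖p‖ ‖q‖) (𝓝 (max ‖p‖ ‖q‖ * ρ)) :=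
      (tendsto_id.mul_const ρ).mono_left nhdsWithin_le_nhds
    have hmax : max ‖p‖ ‖q‖ * ρ < 1 := by rw [max_mul_of_nonneg _ _ hρ]; exact max_lt hp hq
    obtain ⟨r, hr, hlt⟩ := ((hcont.eventually_lt_const hmax).and self_mem_nhdsWithin).exists
    exact ⟨r, (le_max_left _ _).trans_lt hlt, (le_max_right _ _).trans_lt hlt, hr⟩
  obtain ⟨t, ht, htr⟩ := exists_between (sub_pos.2 hpr)
  let V (n : ℕ) : ℝ := ‖c (n + 1) - q • c n‖ + t * ‖c n‖
  have hV (n : ℕ) : t * ‖c n‖ ≤ V n := le_add_of_nonneg_left (norm_nonneg _)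
  have hV₀ (n : ℕ) : 0 ≤ V n * ρ ^ n := by positivity
  have hVsum : Summable fun n => V n * ρ ^ n := by
    refine summable_of_ratio_norm_eventually_le hr ?_
    filter_upwards [eventually_norm_sub_smul_add_le_of_recurrence ha hb hc ht
      (by linarith) hqr] with n hn
    rw [Real.norm_of_nonneg (hV₀ _), Real.norm_of_nonneg (hV₀ _)]
    calc V (n + 1) * ρ ^ (n + 1) ≤ r * V n * ρ ^ (n + 1) := by gcongr
      _ = r * ρ * (V n * ρ ^ n) := by ring
  refine Summable.of_nonneg_of_le (fun n => by positivity) (fun n => ?_) (hVsum.mul_left t⁻¹)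
  rw [← mul_assoc, ← div_eq_inv_mul]
  gcongr
  exact (le_div_iff₀' ht).2 (hV n)

end Poincare

section PowerSeries

variable {c : ℕ → ℂ} {F : ℂ → ℂ} {R : ℝ} {z : ℂ}

theorem hasSum_mul_pow_of_succ {A : Type*} [CommRing A] [TopologicalSpace A]
    [IsTopologicalRing A] {c : ℕ → A} {z S : A} (hc : c 0 = 0)
    (h : HasSum (fun n => c (n + 1) * z ^ n) S) : HasSum (fun n => c n * z ^ n) (z * S) := by
  rw [← hasSum_nat_add_iff' 1, sum_range_one, hc, zero_mul, sub_zero]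
  exact (h.mul_left z).congr_fun fun n => by ring

theorem hasSum_succ_mul_pow_deriv (hF : ∀ z, ‖z‖ < R → HasSum (fun n => c n * z ^ n) (F z))
    (hz : ‖z‖ < R) : HasSum (fun n : ℕ => (n + 1) * c (n + 1) * z ^ n) (deriv F z) := by
  obtain ⟨ρ, hzρ, hρR⟩ := exists_between hz
  have hρ : ‖(ρ : ℂ)‖ = ρ := Complex.norm_of_nonneg ((norm_nonneg z).trans hzρ.le)
  have hsum := Complex.hasSum_deriv_of_summable_norm (F := fun n w => c n * w ^ n)
    (hF ρ (hρ.trans_lt hρR)).summable.norm (fun n => by fun_prop) isOpen_ball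
    (fun n w hw => by
      rw [norm_mul, norm_mul, norm_pow, norm_pow, hρ]
      gcongr
      exact (mem_ball_zero_iff.1 hw).le)
    (mem_ball_zero_iff.2 hzρ)
  have hFeq : (fun w => ∑' n, c n * w ^ n) =ᶠ[𝓝 z] F := by
    filter_upwards [isOpen_ball.mem_nhds (mem_ball_zero_iff.2 hz)] with w hw
    exact (hF w (mem_ball_zero_iff.1 hw)).tsum_eq
  rw [hFeq.deriv_eq, ← hasSum_nat_add_iff' 1] at hsum
  simpa [mul_assoc, mul_comm, mul_left_comm] using hsum

theorem hasSum_natCast_mul_pow_deriv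
    (hF : ∀ z, ‖z‖ < R → HasSum (fun n => c n * z ^ n) (F z)) (hz : ‖z‖ < R) :
    HasSum (fun n : ℕ => n * c n * z ^ n) (z * deriv F z) :=
  hasSum_mul_pow_of_succ (c := fun n => n * c n) (by simp)
    (by simpa using hasSum_succ_mul_pow_deriv hF hz)

theorem hasSum_natCast_mul_succ_mul_pow_deriv_deriv
    (hF : ∀ z, ‖z‖ < R → HasSum (fun n => c n * z ^ n) (F z)) (hz : ‖z‖ < R) :
    HasSum (fun n : ℕ => n * ((n + 1) * c (n + 1)) * z ^ n) (z * deriv (deriv F) z) :=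
  hasSum_natCast_mul_pow_deriv (fun _ => hasSum_succ_mul_pow_deriv hF) hz

theorem hasSum_natCast_mul_sub_one_mul_pow_deriv_deriv
    (hF : ∀ z, ‖z‖ < R → HasSum (fun n => c n * z ^ n) (F z)) (hz : ‖z‖ < R) :
    HasSum (fun n : ℕ => n * (n - 1) * c n * z ^ n) (z ^ 2 * deriv (deriv F) z) := by
  rw [pow_two, mul_assoc]
  refine hasSum_mul_pow_of_succ (c := fun n => n * (n - 1) * c n) (by simp) ?_
  exact (hasSum_natCast_mul_succ_mul_pow_deriv_deriv hF hz).congr_fun fun n => by push_cast; ring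

theorem hasSum_sum_range_succ_mul_pow {𝕜 : Type*} [RCLike 𝕜] {c : ℕ → 𝕜} {z S : 𝕜}
    (h : HasSum (fun n => c n * z ^ n) S) (hz : ‖z‖ < 1) :
    HasSum (fun n => (∑ l ∈ range (n + 1), c l) * z ^ n) (S / (1 - z)) := by
  have hprod := hasSum_sum_range_mul_of_summable_norm h.summable.norm
    (summable_geometric_of_norm_lt_one hz).norm
  rw [h.tsum_eq, tsum_geometric_of_norm_lt_one hz, ← div_eq_mul_inv] at hprod
  refine hprod.congr_fun fun n => ?_
  rw [sum_mul]
  refine sum_congr rfl fun l hl => ?_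
  rw [mul_assoc, ← pow_add, Nat.add_sub_cancel' (Nat.lt_succ_iff.1 (mem_range.1 hl))]

end PowerSeries

/-- The recurrence for the Taylor coefficients at `0` of solutions of Heun's equation with
singular points `0, 1, 1/q, ∞`, where `ε = α + β + 1 - γ - δ`. It is kept in summed form; the
customary three-term recurrence is its first difference, see `HeunRecurrence.three_term`. -/
def HeunRecurrence (q α β γ δ w : ℂ) (c : ℕ → ℂ) : Prop :=
  ∀ n : ℕ, (n + 1) * (γ + n) * c (n + 1) =
    q * ((α + n) * (β + n)) * c n - ∑ l ∈ range (n + 1), (w - (1 - q) * δ * l) * c l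

namespace HeunRecurrence

variable {q α β γ δ w : ℂ} {c : ℕ → ℂ}

theorem three_term (h : HeunRecurrence q α β γ δ w c) (n : ℕ) :
    (n + 2) * (γ + 1 + n) * c (n + 2) =
      (q * ((α + 1 + n) * (β + 1 + n)) + (n + 1) * (γ + n) - (w - (1 - q) * δ * (n + 1))) *
        c (n + 1) - q * ((α + n) * (β + n)) * c n := by
  have hsucc := h (n + 1)
  rw [sum_range_succ] at hsucc
  push_cast at hsucc
  linear_combination hsucc - h n

theorem summable (h : HeunRecurrence q α β γ δ w c) (hγ : ∀ j : ℕ, γ ≠ -j) (hq : ‖q‖ < 1)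
    {z : ℂ} (hz : ‖z‖ < 1) : Summable fun n => c n * z ^ n := by
  have hlim (x y s : ℂ) : Tendsto (fun n : ℕ => (x + s * n) / (y + n)) atTop (𝓝 s) := by
    simpa using tendsto_add_mul_div_add_mul_atTop_nhds x y s one_ne_zero
  have hlim₁ (x y : ℂ) : Tendsto (fun n : ℕ => (x + n) / (y + n)) atTop (𝓝 1) := by
    simpa using hlim x y 1
  have hlim₀ : Tendsto (fun n : ℕ => 1 / (γ + 1 + n)) atTop (𝓝 0) := by
    simpa using hlim 1 (γ + 1) 0
  have hb := ((hlim₁ α 2).mul (hlim₁ β (γ + 1))).const_mul q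
  have ha := ((((hlim₁ (α + 1) 2).mul (hlim₁ (β + 1) (γ + 1))).const_mul q).add
    ((hlim₁ 1 2).mul (hlim₁ γ (γ + 1)))).sub
    ((hlim (w - (1 - q) * δ) 2 (-((1 - q) * δ))).mul hlim₀)
  rw [show q * (1 * 1) + 1 * 1 - -((1 - q) * δ) * 0 = 1 + q by ring] at ha
  rw [show q * (1 * 1) = 1 * q by ring] at hb
  have hsum := summable_norm_mul_pow_of_recurrence (c := c) ha hb (fun n => ?_) (norm_nonneg z)
    (by simpa using hz) (mul_lt_one_of_nonneg_of_lt_one_left (norm_nonneg q) hq hz.le)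
  · exact Summable.of_norm (by simpa using hsum)
  · have h₂ : (2 + n : ℂ) ≠ 0 := by exact_mod_cast (by omega : 2 + n ≠ 0)
    have hγn : γ + 1 + n ≠ 0 := fun h₀ => hγ (n + 1) (by push_cast; linear_combination h₀)
    simp only [smul_eq_mul]
    field_simp
    linear_combination h.three_term n

theorem hypergeometric_form (h : HeunRecurrence q α β γ δ w c) {F : ℂ → ℂ}
    (hF : ∀ z, ‖z‖ < 1 → HasSum (fun n => c n * z ^ n) (F z)) {z : ℂ} (hz : ‖z‖ < 1) :
    z * (1 - q * z) * deriv (deriv F) z + (γ - q * (α + β + 1) * z) * deriv F z -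
      q * α * β * F z = -(w * F z - (1 - q) * δ * (z * deriv F z)) / (1 - z) := by
  have hF₀ := hF z hz
  have hθ := hasSum_natCast_mul_pow_deriv hF hz
  have hlower : HasSum (fun n : ℕ => (n + 1) * (γ + n) * c (n + 1) * z ^ n)
      (z * deriv (deriv F) z + γ * deriv F z) :=
    ((hasSum_natCast_mul_succ_mul_pow_deriv_deriv hF hz).add
      ((hasSum_succ_mul_pow_deriv hF hz).mul_left γ)).congr_fun fun n => by ring
  have hraise : HasSum (fun n : ℕ => (α + n) * (β + n) * c n * z ^ n)
      (z ^ 2 * deriv (deriv F) z + (α + β + 1) * (z * deriv F z) + α * β * F z) :=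
    (((hasSum_natCast_mul_sub_one_mul_pow_deriv_deriv hF hz).add
      (hθ.mul_left (α + β + 1))).add (hF₀.mul_left (α * β))).congr_fun fun n => by ring
  have hmemory : HasSum (fun n : ℕ => (w - (1 - q) * δ * n) * c n * z ^ n)
      (w * F z - (1 - q) * δ * (z * deriv F z)) :=
    ((hF₀.mul_left w).sub (hθ.mul_left ((1 - q) * δ))).congr_fun fun n => by ring
  have heq := (hlower.sub (hraise.mul_left q)).unique
    ((hasSum_sum_range_succ_mul_pow hmemory hz).neg.congr_fun fun n => by
      linear_combination z ^ n * h n)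
  linear_combination heq

theorem heun_equation (h : HeunRecurrence q α β γ δ w c) {F : ℂ → ℂ}
    (hF : ∀ z, ‖z‖ < 1 → HasSum (fun n => c n * z ^ n) (F z)) {z : ℂ} (hz : ‖z‖ < 1)
    (hz₀ : z ≠ 0) (hqz : 1 - q * z ≠ 0) :
    deriv (deriv F) z +
      (γ / z - δ / (1 - z) - (α + β + 1 - γ - δ) * q / (1 - q * z)) * deriv F z +
      (w - q * α * β * (1 - z)) / (z * (1 - z) * (1 - q * z)) * F z = 0 := by
  have hz₁ : 1 - z ≠ 0 := (isUnit_one_sub_of_norm_lt_one hz).ne_zero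
  have hqz' : 1 - z * q ≠ 0 := by rwa [mul_comm]
  have heq := h.hypergeometric_form hF hz
  rw [eq_div_iff hz₁] at heq
  field_simp
  linear_combination heq

end HeunRecurrence

section Hypergeometric

variable {𝕂 : Type*} [Field 𝕂] [CharZero 𝕂]

theorem ordinaryHypergeometricCoefficient_ne_zero {α β γ : 𝕂} (hα : ∀ j : ℕ, α ≠ -j)
    (hβ : ∀ j : ℕ, β ≠ -j) (hγ : ∀ j : ℕ, γ ≠ -j) (n : ℕ) :
    ordinaryHypergeometricCoefficient α β γ n ≠ 0 := by
  have hne {x : 𝕂} (hx : ∀ j : ℕ, x ≠ -j) : (ascPochhammer 𝕂 n).eval x ≠ 0 := by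
    rw [Ne, ascPochhammer_eval_eq_zero_iff]
    rintro ⟨j, -, hj⟩
    exact hx j (by rw [hj, neg_neg])
  simp [ordinaryHypergeometricCoefficient, hne hα, hne hβ, hne hγ, n.factorial_ne_zero]

theorem ordinaryHypergeometricCoefficient_succ (α β : 𝕂) {γ : 𝕂}
    (hγ : ∀ j : ℕ, γ ≠ -j) (n : ℕ) :
    (n + 1) * (γ + n) * ordinaryHypergeometricCoefficient α β γ (n + 1) =
      (α + n) * (β + n) * ordinaryHypergeometricCoefficient α β γ n := by
  have hn : (n + 1 : 𝕂) ≠ 0 := n.cast_add_one_ne_zero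
  have hγn : γ + n ≠ 0 := fun h => hγ n (eq_neg_of_add_eq_zero_left h)
  simp only [ordinaryHypergeometricCoefficient, ascPochhammer_succ_eval, Nat.factorial_succ]
  push_cast
  field_simp

end Hypergeometric

section HeunCoefficients

theorem poch_eq_eval_ascPochhammer (x : ℂ) (n : ℕ) : poch x n = (ascPochhammer ℂ n).eval x := by
  induction n with
  | zero => simp [poch]
  | succ n ih => rw [ascPochhammer_succ_eval, ← ih, poch, prod_range_succ, poch]

theorem poch_mul_div_eq_ordinaryHypergeometricCoefficient (α β γ : ℂ) (n : ℕ) :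
    poch α n * poch β n / (n.factorial * poch γ n) =
      ordinaryHypergeometricCoefficient α β γ n := by
  simp only [poch_eq_eval_ascPochhammer, ordinaryHypergeometricCoefficient]
  field

/-- The factor `T(ℓ, j)` of the sums `f_{m,n} = k^{2n} ∑ ∏_s T(ℓ_s, j_s)`. Each factor absorbs
`-k⁻²` from the prefactor `(-1)^m k^{2n-2m}`, and the Pochhammer symbols are collected into
hypergeometric coefficients. -/
noncomputable def heunKernel (q α β γ δ w : ℂ) (l j : ℕ) : ℂ :=
  -((w - (1 - q) * δ * l) * ordinaryHypergeometricCoefficient α β γ l * q ^ l) /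
    ((α + j) * (β + j) * ordinaryHypergeometricCoefficient α β γ j * q ^ (j + 1))

variable {k : ℝ}

theorem heunKernel_sq (hk : k ≠ 0) (α β γ δ w : ℂ) (l j : ℕ) :
    heunKernel ((k : ℂ) ^ 2) α β γ δ w l j = -(k : ℂ) ^ (-2 : ℤ) *
      ((j.factorial * poch γ j * poch α l * poch β l) /
        (l.factorial * poch γ l * poch α (j + 1) * poch β (j + 1)) *
      (k : ℂ) ^ (-(2 : ℤ) * ((j : ℤ) - (l : ℤ))) * (w - (1 - (k : ℂ) ^ 2) * δ * l)) := by
  have hk' : (k : ℂ) ≠ 0 := by exact_mod_cast hk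
  have hzpow : (k : ℂ) ^ (-(2 : ℤ) * ((j : ℤ) - (l : ℤ))) =
      ((k : ℂ) ^ 2) ^ l / ((k : ℂ) ^ 2) ^ j := by
    rw [← zpow_natCast, ← zpow_natCast, ← zpow_natCast, ← zpow_mul, ← zpow_mul, ← zpow_sub₀ hk']
    congr 1
    push_cast
    ring
  have hsucc (x : ℂ) : poch x (j + 1) = poch x j * (x + j) := prod_range_succ _ _
  simp only [heunKernel, ← poch_mul_div_eq_ordinaryHypergeometricCoefficient, hsucc, hzpow,
    zpow_neg, zpow_ofNat, div_eq_mul_inv, mul_inv, inv_inv]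
  ring

theorem heunf_eq_interlacingSum (hk : k ≠ 0) (α β γ δ w : ℂ) (m n : ℕ) :
    heunf k α β γ δ w m n =
      ((k : ℂ) ^ 2) ^ n * interlacingSum (heunKernel ((k : ℂ) ^ 2) α β γ δ w) m n := by
  have hk' : (k : ℂ) ≠ 0 := by exact_mod_cast hk
  have hprefactor : (-1) ^ m * (k : ℂ) ^ (2 * (n : ℤ) - 2 * m) =
      ((k : ℂ) ^ 2) ^ n * (-(k : ℂ) ^ (-2 : ℤ)) ^ m := by
    rw [neg_pow ((k : ℂ) ^ (-2 : ℤ)), zpow_sub₀ hk', zpow_mul, zpow_mul, zpow_neg]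
    simp only [zpow_natCast, zpow_ofNat, inv_pow]
    ring
  rcases m.eq_zero_or_pos with rfl | hm
  · simp [heunf, interlacingSum_zero, pow_mul]
  rcases lt_or_ge n m with hnm | hmn
  · simp [heunf, interlacingSum_eq_zero_of_lt, hnm, hm.ne']
  · rw [funext₂ (heunKernel_sq hk α β γ δ w), interlacingSum_const_mul,
      ← sum_heunIdx_eq_interlacingSum, ← mul_assoc, ← hprefactor, heunf,
      if_neg (by omega), if_neg (by omega), Int.toNat_natCast]

theorem heunc_eq_interlacingTotal (hk : k ≠ 0) (α β γ δ w : ℂ) (n : ℕ) :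
    heunc k α β γ δ w n = ordinaryHypergeometricCoefficient α β γ n * ((k : ℂ) ^ 2) ^ n *
      interlacingTotal (heunKernel ((k : ℂ) ^ 2) α β γ δ w) n := by
  simp only [heunc, poch_mul_div_eq_ordinaryHypergeometricCoefficient,
    heunf_eq_interlacingSum hk, ← mul_sum, mul_assoc, interlacingTotal]

theorem heunRecurrence_interlacingTotal {q α β γ : ℂ} (hq : q ≠ 0) (hα : ∀ j : ℕ, α ≠ -j)
    (hβ : ∀ j : ℕ, β ≠ -j) (hγ : ∀ j : ℕ, γ ≠ -j) (δ w : ℂ) :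
    HeunRecurrence q α β γ δ w fun n => ordinaryHypergeometricCoefficient α β γ n * q ^ n *
      interlacingTotal (heunKernel q α β γ δ w) n := by
  intro n
  have hker (l : ℕ) : (α + n) * (β + n) * ordinaryHypergeometricCoefficient α β γ n *
      q ^ (n + 1) * heunKernel q α β γ δ w l n =
      -((w - (1 - q) * δ * l) * ordinaryHypergeometricCoefficient α β γ l * q ^ l) := by
    have hαn : α + n ≠ 0 := fun h => hα n (eq_neg_of_add_eq_zero_left h)
    have hβn : β + n ≠ 0 := fun h => hβ n (eq_neg_of_add_eq_zero_left h)
    have hA := ordinaryHypergeometricCoefficient_ne_zero hα hβ hγ n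
    exact mul_div_cancel₀ _ (by simp [hαn, hβn, hA, hq])
  have hsum : (α + n) * (β + n) * ordinaryHypergeometricCoefficient α β γ n * q ^ (n + 1) *
      ∑ l ∈ range (n + 1), heunKernel q α β γ δ w l n *
        interlacingTotal (heunKernel q α β γ δ w) l =
      -∑ l ∈ range (n + 1), (w - (1 - q) * δ * l) * (ordinaryHypergeometricCoefficient α β γ l *
        q ^ l * interlacingTotal (heunKernel q α β γ δ w) l) := by
    rw [mul_sum, ← sum_neg_distrib]
    refine sum_congr rfl fun l _ => ?_
    linear_combination interlacingTotal (heunKernel q α β γ δ w) l * hker l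
  linear_combination
    (q ^ (n + 1) * interlacingTotal (heunKernel q α β γ δ w) (n + 1)) *
      ordinaryHypergeometricCoefficient_succ α β hγ n +
    ((α + n) * (β + n) * ordinaryHypergeometricCoefficient α β γ n * q ^ (n + 1)) *
      interlacingTotal_succ (heunKernel q α β γ δ w) n + hsum

theorem heunRecurrence_heunc {α β γ : ℂ} (hk : k ≠ 0) (hα : ∀ j : ℕ, α ≠ -j)
    (hβ : ∀ j : ℕ, β ≠ -j) (hγ : ∀ j : ℕ, γ ≠ -j) (δ w : ℂ) :
    HeunRecurrence ((k : ℂ) ^ 2) α β γ δ w (heunc k α β γ δ w) := by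
  rw [funext (heunc_eq_interlacingTotal hk α β γ δ w)]
  exact heunRecurrence_interlacingTotal (by simpa using hk) hα hβ hγ δ w

theorem heunc_zero (k : ℝ) (α β γ δ w : ℂ) : heunc k α β γ δ w 0 = 1 := by
  simp [heunc, heunf, poch]

end HeunCoefficients

/-- The power series `F(z) = Σ c_n zⁿ` converges in the open unit disk, takes the
value `1` at `0`, and satisfies Heun's differential equation (with
`ε = α + β + 1 - γ - δ`) on the punctured disk. -/
theorem heun_series_solves_heun_equation (k : ℝ) (hk0 : 0 < k) (hk1 : k < 1)
    (α β γ δ w : ℂ)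
    (hα : ∀ j : ℕ, α ≠ -(j : ℂ)) (hβ : ∀ j : ℕ, β ≠ -(j : ℂ))
    (hγ : ∀ j : ℕ, γ ≠ -(j : ℂ))
    (F : ℂ → ℂ) (hF : ∀ z : ℂ, F z = ∑' n : ℕ, heunc k α β γ δ w n * z ^ n) :
    (∀ z : ℂ, ‖z‖ < 1 → Summable fun n : ℕ => heunc k α β γ δ w n * z ^ n) ∧
    F 0 = 1 ∧
    ∀ z : ℂ, 0 < ‖z‖ → ‖z‖ < 1 →
      deriv (deriv F) z +
        (γ / z - δ / (1 - z) -
            (α + β + 1 - γ - δ) * (k : ℂ) ^ 2 / (1 - (k : ℂ) ^ 2 * z)) * deriv F z +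
        (w - (k : ℂ) ^ 2 * α * β * (1 - z)) /
            (z * (1 - z) * (1 - (k : ℂ) ^ 2 * z)) * F z = 0 := by
  have hrec := heunRecurrence_heunc hk0.ne' hα hβ hγ δ w
  have hq : ‖(k : ℂ) ^ 2‖ < 1 := by
    simpa [abs_of_pos hk0] using pow_lt_one₀ hk0.le hk1 two_ne_zero
  have hsum (z : ℂ) (hz : ‖z‖ < 1) : Summable fun n => heunc k α β γ δ w n * z ^ n :=
    hrec.summable hγ hq hz
  have hFsum (z : ℂ) (hz : ‖z‖ < 1) : HasSum (fun n => heunc k α β γ δ w n * z ^ n) (F z) :=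
    hF z ▸ (hsum z hz).hasSum
  refine ⟨hsum, ?_, fun z hz₀ hz => ?_⟩
  · rw [hF, tsum_eq_single 0 fun n hn => by simp [hn], pow_zero, mul_one, heunc_zero]
  · have hqz : ‖(k : ℂ) ^ 2 * z‖ < 1 := by
      rw [norm_mul]
      exact mul_lt_one_of_nonneg_of_lt_one_left (norm_nonneg _) hq hz.le
    exact hrec.heun_equation hFsum hz (norm_pos_iff.1 hz₀)
      (isUnit_one_sub_of_norm_lt_one hqz).ne_zero
end

section
/- Let α, β, γ ∈ ℂ with none of α, β, γ a nonpositive integer, let δ, w ∈ ℂ, and let k ∈ (0,1). Define f_{m,n} as in the context, with the conventions f_{−1,ℓ} := 0 and f_{m,n} := 0 for m > n. Then for every n ≥ 1 and every m with 0 ≤ m ≤ n: f_{m,n}/k² − f_{m,n−1} = −( (n−1)!·(γ)_{n−1} / (k²·(α)_n·(β)_n) ) · Σ_{ℓ=m−1}^{n−1} ( (α)_ℓ·(β)_ℓ / (ℓ!·(γ)_ℓ) ) · (w − (1−k²)δ·ℓ) · f_{m−1,ℓ}, where for m = 0 the sum is interpreted with f_{−1,ℓ} = 0 (so both sides vanish).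 -/
/-!
Removing the outermost pair `(ℓ_m, j_m)` from an index tuple of `f_{m,n}` leaves a tuple of length
`m - 1` bounded by `ℓ_m`. Multiplying by `k^{-2}` makes the prefactors of `f_{m,n}` and `f_{m,n-1}`
agree, so in the difference only the tuples with `j_m = n - 1` survive; their sum over `ℓ_m` is the
right-hand side, because each summand splits as (weight of `j`) · (weight of `ℓ`) · `k^{-2(j-ℓ)}`
and the powers of `k` telescope.
-/

section Index

variable {m n : ℕ}

lemma mem_heunIdx {p : (Fin m → Fin n) × (Fin m → Fin n)} :
    p ∈ heunIdx m n ↔ (∀ s, (p.1 s : ℕ) ≤ p.2 s) ∧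
      ∀ s t : Fin m, (s : ℕ) + 1 = t → (p.2 s : ℕ) < p.1 t := by
  simp [heunIdx]

lemma strictMono_fst_of_mem_heunIdx {p : (Fin m → Fin n) × (Fin m → Fin n)}
    (hp : p ∈ heunIdx m n) : StrictMono p.1 := by
  obtain ⟨hle, hlt⟩ := mem_heunIdx.1 hp
  cases m with
  | zero => exact Subsingleton.strictMono _
  | succ m =>
    exact Fin.strictMono_iff_lt_succ.2 fun i =>
      (hle i.castSucc).trans_lt (hlt i.castSucc i.succ (by simp))

lemma heunIdx_eq_empty_of_lt (h : n < m) : heunIdx m n = ∅ := by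
  refine Finset.eq_empty_of_forall_notMem fun p hp => h.not_ge ?_
  simpa using Fintype.card_le_of_injective p.1 (strictMono_fst_of_mem_heunIdx hp).injective

lemma snd_castSucc_lt_fst_last {p : (Fin (m + 1) → Fin n) × (Fin (m + 1) → Fin n)}
    (hp : p ∈ heunIdx (m + 1) n) (s : Fin m) :
    (p.2 s.castSucc : ℕ) < p.1 (Fin.last m) :=
  ((mem_heunIdx.1 hp).2 s.castSucc s.succ (by simp)).trans_le
    ((strictMono_fst_of_mem_heunIdx hp).monotone (Fin.le_last _))

/-- The tuple `(ℓ_1, j_1, …, ℓ_m, j_m, l, j)` obtained by appending the pair `(l, j)` to a tuple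
with entries below `l`. The constraints `l ≤ j < n` are carried by the types of `l` and `j`. -/
def heunIdxSnoc (j : Fin n) (l : Fin (j + 1)) (p : (Fin m → Fin l) × (Fin m → Fin l)) :
    (Fin (m + 1) → Fin n) × (Fin (m + 1) → Fin n) :=
  (Fin.snoc (α := fun _ => Fin n) (fun s => (p.1 s).castLE (by omega)) (l.castLE (by omega)),
    Fin.snoc (α := fun _ => Fin n) (fun s => (p.2 s).castLE (by omega)) j)

lemma heunIdxSnoc_mem_heunIdx (j : Fin n) (l : Fin (j + 1))
    {p : (Fin m → Fin l) × (Fin m → Fin l)} (hp : p ∈ heunIdx m l) :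
    heunIdxSnoc j l p ∈ heunIdx (m + 1) n := by
  obtain ⟨hle, hlt⟩ := mem_heunIdx.1 hp
  refine mem_heunIdx.2 ⟨fun s => ?_, fun s t hst => ?_⟩
  · cases s using Fin.lastCases with
    | last => simpa [heunIdxSnoc] using Nat.lt_succ_iff.1 l.isLt
    | cast s => simpa [heunIdxSnoc] using hle s
  · cases s using Fin.lastCases with
    | last =>
      rw [Fin.val_last] at hst
      omega
    | cast s =>
      cases t using Fin.lastCases with
      | last => simp [heunIdxSnoc]
      | cast t => simpa [heunIdxSnoc] using hlt s t (by simpa using hst)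

lemma heunIdxSnoc_injective :
    Function.Injective
      fun x : Σ (j : Fin n) (l : Fin (j + 1)), (Fin m → Fin l) × (Fin m → Fin l) =>
        heunIdxSnoc x.1 x.2.1 x.2.2 := by
  rintro ⟨j, l, p⟩ ⟨j', l', p'⟩ h
  obtain ⟨hfst, hsnd⟩ := Prod.mk.inj h
  obtain ⟨hp₂, rfl⟩ := Fin.snoc_inj.1 hsnd
  obtain ⟨hp₁, hl⟩ := Fin.snoc_inj.1 hfst
  obtain rfl : l = l' := Fin.castLE_injective _ hl
  have hp : p = p' := Prod.ext
    (funext fun s => Fin.castLE_injective _ (congrFun hp₁ s))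
    (funext fun s => Fin.castLE_injective _ (congrFun hp₂ s))
  rw [hp]

lemma exists_heunIdxSnoc_eq {q : (Fin (m + 1) → Fin n) × (Fin (m + 1) → Fin n)}
    (hq : q ∈ heunIdx (m + 1) n) :
    ∃ (j : Fin n) (l : Fin (j + 1)), ∃ p ∈ heunIdx m l, heunIdxSnoc j l p = q := by
  obtain ⟨hle, hlt⟩ := mem_heunIdx.1 hq
  have hbound := snd_castSucc_lt_fst_last hq
  refine ⟨q.2 (Fin.last m), ⟨q.1 (Fin.last m), Nat.lt_succ_of_le (hle _)⟩,
    (fun s => ⟨q.1 s.castSucc, (hle _).trans_lt (hbound s)⟩,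
      fun s => ⟨q.2 s.castSucc, hbound s⟩),
    mem_heunIdx.2 ⟨fun s => hle _, fun s t hst => hlt _ _ (by simpa using hst)⟩, ?_⟩
  refine Prod.ext (funext fun s => ?_) (funext fun s => ?_) <;>
    cases s using Fin.lastCases <;> simp [heunIdxSnoc]

end Index

section ChainSum

variable {R : Type*} [CommSemiring R]

/-- The sum of `∏ T ℓ_s j_s` over all `0 ≤ ℓ_1 ≤ j_1 < ℓ_2 ≤ j_2 < ⋯ < ℓ_m ≤ j_m < n`: the nested
sum in `f_{m,n}` with an arbitrary kernel `T`. -/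
def chainSum (T : ℕ → ℕ → R) (m n : ℕ) : R :=
  ∑ p ∈ heunIdx m n, ∏ s, T (p.1 s) (p.2 s)

@[simp]
lemma chainSum_zero (T : ℕ → ℕ → R) (n : ℕ) : chainSum T 0 n = 1 := by
  simp [chainSum, heunIdx]

lemma chainSum_eq_zero_of_lt (T : ℕ → ℕ → R) {m n : ℕ} (h : n < m) : chainSum T m n = 0 := by
  rw [chainSum, heunIdx_eq_empty_of_lt h, Finset.sum_empty]

lemma chainSum_succ (T : ℕ → ℕ → R) (m n : ℕ) :
    chainSum T (m + 1) n =
      ∑ j ∈ Finset.range n, ∑ l ∈ Finset.range (j + 1), T l j * chainSum T m l := by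
  simp only [Finset.sum_range, chainSum]
  simp only [Finset.mul_sum, Finset.sum_sigma']
  symm
  refine Finset.sum_nbij (fun x => heunIdxSnoc x.1 x.2.1 x.2.2) ?_
    heunIdxSnoc_injective.injOn ?_ ?_
  · rintro ⟨j, l, p⟩ hx
    exact heunIdxSnoc_mem_heunIdx j l (by simpa using hx)
  · intro q hq
    obtain ⟨j, l, p, hp, rfl⟩ := exists_heunIdxSnoc_eq hq
    exact ⟨⟨j, l, p⟩, by simpa using hp, rfl⟩
  · rintro ⟨j, l, p⟩ -
    simp [heunIdxSnoc, Fin.prod_univ_castSucc, mul_comm]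

lemma chainSum_succ_succ (T : ℕ → ℕ → R) (m n : ℕ) :
    chainSum T (m + 1) (n + 1) =
      chainSum T (m + 1) n + ∑ l ∈ Finset.Icc m n, T l n * chainSum T m l := by
  have hsupport : ∑ l ∈ Finset.Icc m n, T l n * chainSum T m l =
      ∑ l ∈ Finset.range (n + 1), T l n * chainSum T m l := by
    refine Finset.sum_subset (fun l hl => ?_) fun l hl hlm => ?_
    · exact Finset.mem_range_succ_iff.2 (Finset.mem_Icc.1 hl).2
    · simp only [Finset.mem_range, Finset.mem_Icc] at hl hlm
      have hlt : l < m := by omega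
      rw [chainSum_eq_zero_of_lt T hlt, mul_zero]
  rw [chainSum_succ, Finset.sum_range_succ, ← chainSum_succ, hsupport]

end ChainSum

section WeightedChainSum

variable {K : Type*} [Field K]

/-- The coefficients `f_{m,n}` with `k²` replaced by `q`, and with arbitrary weights `a j` and
`b l` of the upper and lower indices in place of the Pochhammer quotients. -/
def weightedChainSum (q : K) (a b : ℕ → K) (m n : ℕ) : K :=
  (-1) ^ m * q ^ ((n : ℤ) - m) * chainSum (fun l j => a j * b l * q ^ (-((j : ℤ) - l))) m n

lemma weightedChainSum_zero (q : K) (a b : ℕ → K) (n : ℕ) :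
    weightedChainSum q a b 0 n = q ^ n := by
  simp [weightedChainSum]

lemma weightedChainSum_eq_zero_of_lt (q : K) (a b : ℕ → K) {m n : ℕ} (h : n < m) :
    weightedChainSum q a b m n = 0 := by
  rw [weightedChainSum, chainSum_eq_zero_of_lt _ h, mul_zero]

lemma weightedChainSum_succ_div_sub {q : K} (hq : q ≠ 0) (a b : ℕ → K) (m n : ℕ) :
    weightedChainSum q a b (m + 1) (n + 1) / q - weightedChainSum q a b (m + 1) n =
      -(a n / q) * ∑ l ∈ Finset.Icc m n, b l * weightedChainSum q a b m l := by
  have hprefactor : q ^ (((n + 1 : ℕ) : ℤ) - (m + 1 : ℕ)) = q ^ ((n : ℤ) - (m + 1 : ℕ)) * q := by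
    rw [← zpow_add_one₀ hq]
    congr 1
    push_cast
    ring
  have htelescope (l : ℕ) :
      q ^ ((n : ℤ) - (m + 1 : ℕ)) * q ^ (-((n : ℤ) - l)) = q ^ ((l : ℤ) - m) / q := by
    rw [div_eq_mul_inv, ← zpow_add₀ hq, ← zpow_sub_one₀ hq]
    congr 1
    push_cast
    ring
  simp only [weightedChainSum]
  set S := chainSum fun l j => a j * b l * q ^ (-((j : ℤ) - l)) with hS
  calc _ = (-1) ^ (m + 1) * q ^ ((n : ℤ) - (m + 1 : ℕ)) * (S (m + 1) (n + 1) - S (m + 1) n) := by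
        rw [hprefactor]; field_simp
    _ = (-1) ^ (m + 1) * q ^ ((n : ℤ) - (m + 1 : ℕ)) *
          ∑ l ∈ Finset.Icc m n, a n * b l * q ^ (-((n : ℤ) - l)) * S m l := by
        rw [hS, chainSum_succ_succ, add_sub_cancel_left]
    _ = _ := by
        rw [Finset.mul_sum, Finset.mul_sum]
        refine Finset.sum_congr rfl fun l _ => ?_
        linear_combination (-1) ^ (m + 1) * a n * b l * S m l * htelescope l

end WeightedChainSum

section Heun

variable (k : ℝ) (α β γ δ w : ℂ)

/-- The factor `j! (γ)_j / ((α)_{j+1} (β)_{j+1})` contributed by an upper index `j` to the summand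
of `f_{m,n}`, the power of `k` being kept apart. -/
noncomputable def heunUpperWeight (j : ℕ) : ℂ :=
  (Nat.factorial j : ℂ) * poch γ j / (poch α (j + 1) * poch β (j + 1))

/-- The factor `(α)_ℓ (β)_ℓ / (ℓ! (γ)_ℓ) · (w - (1 - k²)δℓ)` contributed by a lower index `ℓ` to the
summand of `f_{m,n}`, the power of `k` being kept apart. -/
noncomputable def heunLowerWeight (l : ℕ) : ℂ :=
  poch α l * poch β l / ((Nat.factorial l : ℂ) * poch γ l) * (w - (1 - (k : ℂ) ^ 2) * δ * (l : ℂ))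

lemma heunf_natCast (m n : ℕ) :
    heunf k α β γ δ w (m : ℤ) n =
      weightedChainSum ((k : ℂ) ^ 2) (heunUpperWeight α β γ) (heunLowerWeight k α β γ δ w) m n := by
  have hpow (e : ℤ) : ((k : ℂ) ^ 2) ^ e = (k : ℂ) ^ (2 * e) := (zpow_mul _ 2 e).symm
  unfold heunf
  split_ifs with hzero hlt
  · obtain rfl : m = 0 := by exact_mod_cast hzero
    rw [weightedChainSum_zero, pow_mul]
  · rw [weightedChainSum_eq_zero_of_lt _ _ _ (by omega)]
  · simp only [weightedChainSum, chainSum, Int.toNat_natCast, hpow, mul_sub]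
    congr 1
    refine Finset.sum_congr rfl fun p _ => Finset.prod_congr rfl fun s _ => ?_
    simp only [heunUpperWeight, heunLowerWeight]
    ring_nf

lemma heunf_of_neg {m : ℤ} (hm : m < 0) (n : ℕ) : heunf k α β γ δ w m n = 0 := by
  simp [heunf, hm, hm.ne]

lemma heunf_zero (n : ℕ) : heunf k α β γ δ w 0 n = (k : ℂ) ^ (2 * n) := by
  simp [heunf]

theorem heunf_difference_identity_general (hk : k ≠ 0)
    (_hα : ∀ j : ℕ, α ≠ -(j : ℂ)) (_hβ : ∀ j : ℕ, β ≠ -(j : ℂ)) (_hγ : ∀ j : ℕ, γ ≠ -(j : ℂ))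
    {n : ℕ} (hn : 1 ≤ n) (m : ℕ) :
    heunf k α β γ δ w (m : ℤ) n / (k : ℂ) ^ 2 - heunf k α β γ δ w (m : ℤ) (n - 1) =
      -(((Nat.factorial (n - 1) : ℂ) * poch γ (n - 1)) /
          ((k : ℂ) ^ 2 * poch α n * poch β n)) *
        ∑ ℓ ∈ Finset.Icc (m - 1) (n - 1),
          poch α ℓ * poch β ℓ / ((Nat.factorial ℓ : ℂ) * poch γ ℓ) *
            (w - (1 - (k : ℂ) ^ 2) * δ * (ℓ : ℂ)) *
            heunf k α β γ δ w ((m : ℤ) - 1) ℓ := by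
  have hq : (k : ℂ) ^ 2 ≠ 0 := pow_ne_zero 2 (by exact_mod_cast hk)
  obtain ⟨n, rfl⟩ := Nat.exists_eq_add_of_le' hn
  cases m with
  | zero => simp [heunf_zero, heunf_of_neg, mul_add, pow_add, hq]
  | succ m =>
    have hcast : ((m + 1 : ℕ) : ℤ) - 1 = (m : ℤ) := by push_cast; ring
    simp only [hcast, Nat.add_sub_cancel, heunf_natCast, weightedChainSum_succ_div_sub hq]
    rw [heunUpperWeight, div_div, mul_comm _ ((k : ℂ) ^ 2), ← mul_assoc]
    rfl

end Heun

/-- The difference identity `f_{m,n}/k² - f_{m,n-1} =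
-((n-1)!(γ)_{n-1}/(k²(α)_n(β)_n)) Σ_{ℓ=m-1}^{n-1}
((α)_ℓ(β)_ℓ/(ℓ!(γ)_ℓ))(w - (1-k²)δℓ) f_{m-1,ℓ}` for `n ≥ 1`, `0 ≤ m ≤ n`
(with `f_{-1,ℓ} = 0`, so that both sides vanish for `m = 0`). -/
theorem heunf_difference_identity (k : ℝ) (hk0 : 0 < k) (hk1 : k < 1)
    (α β γ δ w : ℂ)
    (hα : ∀ j : ℕ, α ≠ -(j : ℂ)) (hβ : ∀ j : ℕ, β ≠ -(j : ℂ))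
    (hγ : ∀ j : ℕ, γ ≠ -(j : ℂ)) :
    ∀ n : ℕ, 1 ≤ n → ∀ m : ℕ, m ≤ n →
      heunf k α β γ δ w (m : ℤ) n / (k : ℂ) ^ 2 - heunf k α β γ δ w (m : ℤ) (n - 1) =
      -(((Nat.factorial (n - 1) : ℂ) * poch γ (n - 1)) /
          ((k : ℂ) ^ 2 * poch α n * poch β n)) *
        ∑ ℓ ∈ Finset.Icc (m - 1) (n - 1),
          poch α ℓ * poch β ℓ / ((Nat.factorial ℓ : ℂ) * poch γ ℓ) *
            (w - (1 - (k : ℂ) ^ 2) * δ * (ℓ : ℂ)) *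
            heunf k α β γ δ w ((m : ℤ) - 1) ℓ := fun _ hn m _ =>
  heunf_difference_identity_general k α β γ δ w hk0.ne' hα hβ hγ hn m
end
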